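/- arXiv:2506.18447 — 2 statements merged into one kernel-verified Lean document; each statement's English description precedes it below -/
import Mathlib

section
/- For every α > 0, taking values in the extended reals, sup{ (−Σ_{i=1}^N q_i log q_i) / (−Σ_{i=1}^N q_i log λ_i) : (q_1,…,q_N) is a probability vector with Σ_{i=1}^N q_i log p_i + α ≤ 0 } = inf_{q ∈ (−∞,0)} P_α(q), with the conventions 0·log 0 = 0 and sup ∅ = −∞. Moreover, if inf_{q<0} P_α(q) is attained at some q* < 0, then the supremum is attained at the probability vector (q*_1,…,q*_N) with q*_i = λ_i^{P_α(q*)} (p_i e^α)^{q*}. -/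
/-!
Write `A i = p i * e^α` and `F_S(t) = ∑ λ_i^S A_i^t`, so that `F_{P t}(t) = 1`; the constraint on a
probability vector `q` reads `∑ q_i log A_i ≤ 0`.

The upper bound is Gibbs' inequality `-∑ q_i log q_i ≤ -∑ q_i log w_i` applied to
`w_i = λ_i^(P t) A_i^t`: since `t < 0`, the term `-t ∑ q_i log A_i` is nonpositive.

For the lower bound, let `S` be a real number with `S < P t` for all `t < 0`. As `λ_i < 1`, this
gives `F_S > 1` on `(-∞, 0)`, and a feasible vector whose ratio is at least `S` is found as follows.
If some `A_i < 1`, then `F_S` is coercive at `-∞` and has a minimiser `t₀` on `(-∞, 0]`; the vector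
`λ_i^S A_i^t₀ / F_S(t₀)` works, because `F_S'(t₀) ≤ 0`, with equality when `t₀ < 0`, expresses
feasibility. If all `A_i ≥ 1`, then letting `t → -∞` gives `∑_{A_i = 1} λ_i^S ≥ 1`, and the
normalisation of `λ_i^S` on `{A_i = 1}` works (`exists_feasible`).

If `t < 0` minimises `P` on `(-∞, 0)`, it also minimises `F_{P t}` there, so `F_{P t}'(t) = 0`. This
is the equality case of the constraint, and the entropy of `λ_i^(P t) A_i^t` can be computed.
-/


open MeasureTheory Filter Topology Set ENNReal

noncomputable section

/-- The cylinder set in `{1,…,N}^ℕ` determined by a finite word `w` of length `m`. -/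
def cylinder {N m : ℕ} (w : Fin m → Fin N) : Set (ℕ → Fin N) :=
  {x | ∀ j : Fin m, x (j : ℕ) = w j}

/-- The product `r_{w 0} ⋯ r_{w (m-1)}` of weights along a finite word `w`. -/
def wordProd {N : ℕ} (r : Fin N → ℝ) {m : ℕ} (w : Fin m → Fin N) : ℝ :=
  ∏ j, r (w j)

/-- The composition `f_{x 0} ∘ f_{x 1} ∘ ⋯ ∘ f_{x (n-1)}` of the maps along
the first `n` symbols of `x`; the coding map is `π x = lim_n prefixMap f x n 0`. -/
def prefixMap {N : ℕ} {E : Type*} (f : Fin N → E → E) (x : ℕ → Fin N) : ℕ → E → E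
  | 0 => id
  | n + 1 => fun y => f (x 0) (prefixMap f (fun k => x (k + 1)) n y)

/-- The symbolic limsup set `⋂ₖ ⋃_{n ≥ k} [(σⁿ ō)|_{ℓ(n)}]`; its image under the
coding map `π` is the dynamical covering set `R(ō, ℓ)`. -/
def limsupCylinders {N : ℕ} (ℓ : ℕ → ℕ) (o : ℕ → Fin N) : Set (ℕ → Fin N) :=
  ⋂ k, ⋃ n, ⋃ _ : k ≤ n, cylinder (fun j : Fin (ℓ n) => o (n + (j : ℕ)))

/-- `m(n) = ⌊#{k ∈ ℕ : ℓ(k) = n}/n⌋`. -/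
def countM (ℓ : ℕ → ℕ) (n : ℕ) : ℕ := Nat.card {k : ℕ | ℓ k = n} / n

/-- The probabilistic pressure
`L(s) = limsup_n (1/n) log Σ_{|ȷ|=n} λ_ȷ^s (1 − (1 − p_ȷ)^{m(n)})`. -/
def pressL {N : ℕ} (lam p : Fin N → ℝ) (m : ℕ → ℕ) (s : ℝ) : ℝ :=
  Filter.limsup (fun n : ℕ => Real.log (∑ w : Fin n → Fin N,
    wordProd lam w ^ s * (1 - (1 - wordProd p w) ^ m n)) / (n : ℝ)) atTop

section Aux

variable {ι : Type*} [Fintype ι]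

/-- The Lyapunov exponent of a probability vector is positive. -/
lemma lyapunov_pos {lam q : ι → ℝ} (hlam : ∀ i, lam i ∈ Set.Ioo (0 : ℝ) 1)
    (hq : ∀ i, 0 ≤ q i) (hqs : ∑ i, q i = 1) : 0 < -∑ i, q i * Real.log (lam i) := by
  have hl : ∀ i, Real.log (lam i) < 0 := fun i => Real.log_neg (hlam i).1 (hlam i).2
  obtain ⟨i, -, hi⟩ : ∃ i ∈ Finset.univ, q i ≠ 0 := by
    apply Finset.exists_ne_zero_of_sum_ne_zero
    rw [hqs]; exact one_ne_zero
  rw [← Finset.sum_neg_distrib]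
  refine Finset.sum_pos' (fun j _ => ?_) ⟨i, Finset.mem_univ _, ?_⟩
  · nlinarith [hl j, hq j]
  · nlinarith [hl i, lt_of_le_of_ne (hq i) (Ne.symm hi)]

lemma gibbs {w q : ι → ℝ} (hw : ∀ i, 0 < w i) (hws : ∑ i, w i = 1)
    (hq : ∀ i, 0 ≤ q i) (hqs : ∑ i, q i = 1) :
    -∑ i, q i * Real.log (q i) ≤ -∑ i, q i * Real.log (w i) := by
  have h : ∑ i, (q i * Real.log (w i) - q i * Real.log (q i)) ≤ ∑ i, (w i - q i) := by
    refine Finset.sum_le_sum fun i _ => ?_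
    rcases (hq i).eq_or_lt with h0 | h0
    · simp [← h0, (hw i).le]
    · have h1 := Real.log_le_sub_one_of_pos (div_pos (hw i) h0)
      rw [Real.log_div (hw i).ne' h0.ne'] at h1
      have h2 := mul_le_mul_of_nonneg_left h1 h0.le
      have h3 : q i * (w i / q i - 1) = w i - q i := by field_simp
      linarith
  rw [Finset.sum_sub_distrib, Finset.sum_sub_distrib, hws, hqs] at h
  linarith

lemma log_weight {l a : ℝ} (hl : 0 < l) (ha : 0 < a) (S t : ℝ) :
    Real.log (l ^ S * a ^ t) = S * Real.log l + t * Real.log a := by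
  rw [Real.log_mul (Real.rpow_pos_of_pos hl _).ne' (Real.rpow_pos_of_pos ha _).ne',
    Real.log_rpow hl, Real.log_rpow ha]

/-- Entropy of a vector which on its support is `λ_i^S A_i^t / c`. -/
lemma entropy_eq {lam A q : ι → ℝ} {S t c : ℝ} (hqs : ∑ i, q i = 1)
    (h : ∀ i, q i = 0 ∨
      Real.log (q i) = S * Real.log (lam i) + t * Real.log (A i) - Real.log c) :
    -∑ i, q i * Real.log (q i) = S * (-∑ i, q i * Real.log (lam i))
      - t * ∑ i, q i * Real.log (A i) + Real.log c := by
  have h1 : ∀ i, q i * Real.log (q i) =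
      S * (q i * Real.log (lam i)) + t * (q i * Real.log (A i)) - Real.log c * q i := by
    intro i
    rcases h i with h0 | h0
    · simp [h0]
    · rw [h0]; ring
  rw [Finset.sum_congr rfl fun i _ => h1 i, Finset.sum_sub_distrib, Finset.sum_add_distrib,
    ← Finset.mul_sum, ← Finset.mul_sum, ← Finset.mul_sum, hqs]
  ring

lemma hasDerivAt_F {A : ι → ℝ} (hA : ∀ i, 0 < A i) (b : ι → ℝ) (t : ℝ) :
    HasDerivAt (fun t : ℝ => ∑ i, b i * A i ^ t)
      (∑ i, b i * A i ^ t * Real.log (A i)) t := by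
  refine HasDerivAt.fun_sum fun i _ => ?_
  rw [mul_assoc]
  exact ((Real.hasStrictDerivAt_const_rpow (hA i) t).hasDerivAt).const_mul (b i)

lemma deriv_nonpos_of_min_left {f : ℝ → ℝ} {d x : ℝ} (hf : HasDerivAt f d x)
    (h : ∀ y < x, f x ≤ f y) : d ≤ 0 := by
  have h1 := (hasDerivWithinAt_iff_tendsto_slope' (s := Set.Iio x) (by simp)).1
    (hf.hasDerivWithinAt (s := Set.Iio x))
  refine le_of_tendsto h1 ?_
  filter_upwards [self_mem_nhdsWithin] with y hy
  rw [slope_def_field]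
  exact div_nonpos_of_nonneg_of_nonpos (sub_nonneg.2 (h y hy)) (sub_nonpos.2 (le_of_lt hy))

/-- Any `S` for which `F_S` exceeds `1` on `(-∞, 0)` is a lower bound for the entropy-over-Lyapunov
ratio of some feasible vector. -/
lemma exists_feasible [Nonempty ι] {lam A : ι → ℝ} (hlam : ∀ i, lam i ∈ Set.Ioo (0 : ℝ) 1)
    (hA : ∀ i, 0 < A i) {S : ℝ} (hF : ∀ t : ℝ, t < 0 → 1 < ∑ i, lam i ^ S * A i ^ t) :
    ∃ q : ι → ℝ, (∀ i, 0 ≤ q i) ∧ ∑ i, q i = 1 ∧ ∑ i, q i * Real.log (A i) ≤ 0 ∧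
      S ≤ (-∑ i, q i * Real.log (q i)) / (-∑ i, q i * Real.log (lam i)) := by
  have hb : ∀ i, 0 < lam i ^ S := fun i => Real.rpow_pos_of_pos (hlam i).1 _
  -- It suffices to exhibit a normalised weight `λ_i^S A_i^t / c`, possibly cut off to a subset.
  suffices h : ∃ (q : ι → ℝ) (t c : ℝ), (∀ i, 0 ≤ q i) ∧ ∑ i, q i = 1 ∧
      ∑ i, q i * Real.log (A i) ≤ 0 ∧ t * ∑ i, q i * Real.log (A i) ≤ 0 ∧ 1 ≤ c ∧
      ∀ i, q i = 0 ∨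
        Real.log (q i) = S * Real.log (lam i) + t * Real.log (A i) - Real.log c by
    obtain ⟨q, t, c, hq, hqs, hf, htf, hc, hlog⟩ := h
    refine ⟨q, hq, hqs, hf, ?_⟩
    rw [le_div_iff₀ (lyapunov_pos hlam hq hqs), entropy_eq hqs hlog]
    linarith [Real.log_nonneg hc]
  by_cases hneg : ∃ i, A i < 1
  · obtain ⟨i, hi⟩ := hneg
    set F : ℝ → ℝ := fun t => ∑ i, lam i ^ S * A i ^ t with hFdef
    have hFd := hasDerivAt_F hA (fun i => lam i ^ S)
    have hcont : Continuous F :=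
      continuous_iff_continuousAt.2 fun t => (hFd t).continuousAt
    have hbig : Filter.Tendsto F Filter.atBot Filter.atTop := by
      have h1 : Filter.Tendsto (fun t : ℝ => lam i ^ S * A i ^ t) Filter.atBot Filter.atTop :=
        (tendsto_rpow_atBot_of_base_lt_one _ (hA i) hi).const_mul_atTop (hb i)
      refine Filter.tendsto_atTop_mono (fun t => ?_) h1
      exact Finset.single_le_sum (f := fun i => lam i ^ S * A i ^ t)
        (fun j _ => mul_nonneg (hb j).le (Real.rpow_pos_of_pos (hA j) _).le) (Finset.mem_univ i)
    obtain ⟨T, hT⟩ := Filter.eventually_atBot.1 (hbig.eventually_ge_atTop (F 0))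
    obtain ⟨t₀, ht₀, hmin⟩ := (isCompact_Icc (a := min T 0) (b := 0)).exists_isMinOn
      ⟨0, by simp⟩ hcont.continuousOn
    have hmin' : ∀ t ≤ 0, F t₀ ≤ F t := by
      intro t ht
      by_cases hmT : min T 0 ≤ t
      · exact hmin ⟨hmT, ht⟩
      · have h0 : F t₀ ≤ F 0 := hmin ⟨min_le_right _ _, le_rfl⟩
        exact h0.trans (hT t ((not_le.1 hmT).le.trans (min_le_left _ _)))
    have hge : ∀ t ≤ 0, 1 ≤ F t := by
      intro t ht
      rcases ht.lt_or_eq with h | h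
      · exact (hF t h).le
      · have hlim : Filter.Tendsto F (nhdsWithin 0 (Set.Iio 0)) (nhds (F 0)) :=
          hcont.continuousAt.tendsto.mono_left nhdsWithin_le_nhds
        rw [h]
        refine ge_of_tendsto hlim ?_
        filter_upwards [self_mem_nhdsWithin] with y hy using (hF y hy).le
    have hc := hge t₀ ht₀.2
    have hc0 : 0 < F t₀ := by linarith
    set d : ℝ := ∑ i, lam i ^ S * A i ^ t₀ * Real.log (A i) with hd
    have hd0 : d ≤ 0 := deriv_nonpos_of_min_left (hFd t₀)
      fun y hy => hmin' y (hy.le.trans ht₀.2)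
    have htd : t₀ * d = 0 := by
      rcases ht₀.2.lt_or_eq with h | h
      · have : IsLocalMin F t₀ := by
          filter_upwards [Iio_mem_nhds h] with y hy using hmin' y (le_of_lt hy)
        have hd00 : d = 0 := this.hasDerivAt_eq_zero (hFd t₀)
        rw [hd00, mul_zero]
      · rw [h, zero_mul]
    have hsum : ∑ i, lam i ^ S * A i ^ t₀ / F t₀ * Real.log (A i) = d / F t₀ := by
      rw [hd, Finset.sum_div]
      exact Finset.sum_congr rfl fun i _ => by ring
    have hw : ∀ i, 0 < lam i ^ S * A i ^ t₀ :=
      fun i => mul_pos (hb i) (Real.rpow_pos_of_pos (hA i) _)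
    refine ⟨fun i => lam i ^ S * A i ^ t₀ / F t₀, t₀, F t₀, fun i => (div_pos (hw i) hc0).le,
      ?_, ?_, ?_, hc, fun i => Or.inr ?_⟩
    · rw [← Finset.sum_div]; exact div_self hc0.ne'
    · rw [hsum]; exact div_nonpos_of_nonpos_of_nonneg hd0 hc0.le
    · rw [hsum, ← mul_div_assoc, htd, zero_div]
    · rw [Real.log_div (hw i).ne' hc0.ne', log_weight (hlam i).1 (hA i)]
  · push Not at hneg
    have hlim : Filter.Tendsto (fun t : ℝ => ∑ i, lam i ^ S * A i ^ t) Filter.atBot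
        (nhds (∑ i, if A i = 1 then lam i ^ S else 0)) := by
      refine tendsto_finsetSum _ fun i _ => ?_
      by_cases h1 : A i = 1
      · simp [h1]
      · have h2 := (tendsto_rpow_atBot_of_base_gt_one (A i)
          (lt_of_le_of_ne (hneg i) (Ne.symm h1))).const_mul (lam i ^ S)
        simpa [h1] using h2
    set c : ℝ := ∑ i, if A i = 1 then lam i ^ S else 0 with hcdef
    have hc : 1 ≤ c := by
      refine ge_of_tendsto hlim ?_
      filter_upwards [Filter.eventually_lt_atBot 0] with t ht using (hF t ht).le
    have hc0 : 0 < c := by linarith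
    have hsum : ∑ i, (if A i = 1 then lam i ^ S else 0) / c * Real.log (A i) = 0 := by
      refine Finset.sum_eq_zero fun i _ => ?_
      by_cases h1 : A i = 1 <;> simp [h1]
    refine ⟨fun i => (if A i = 1 then lam i ^ S else 0) / c, 0, c, fun i => ?_, ?_, hsum.le,
      by rw [zero_mul], hc, fun i => ?_⟩
    · refine div_nonneg ?_ hc0.le
      split_ifs
      exacts [(hb i).le, le_rfl]
    · rw [← Finset.sum_div]; exact div_self hc0.ne'
    · by_cases h1 : A i = 1
      · right
        simp only [if_pos h1]
        rw [Real.log_div (hb i).ne' hc0.ne', Real.log_rpow (hlam i).1]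
        ring
      · left; simp [h1]

end Aux

/-- Variational principle: the entropy-over-Lyapunov supremum over probability
vectors with `Σ q_i log p_i + α ≤ 0` equals `inf_(q<0) P_α(q)` (in extended reals),
and the supremum is attained at `q*_i = λ_i^(P_α(q*)) (p_i e^α)^(q*)` whenever the
infimum is attained at some `q* < 0`. -/
theorem variational_principle_neg {N : ℕ} [NeZero N] (hN : 2 ≤ N)
    (lam p : Fin N → ℝ)
    (hlam : ∀ i, lam i ∈ Set.Ioo (0 : ℝ) 1)
    (hp : ∀ i, 0 < p i) (hpsum : ∑ i, p i = 1)
    (α : ℝ) (hα : 0 < α)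
    (P : ℝ → ℝ)
    (hP : ∀ q : ℝ, ∑ i, lam i ^ P q * (p i * Real.exp α) ^ q = 1) :
    sSup {r : EReal | ∃ q : Fin N → ℝ, (∀ i, 0 ≤ q i) ∧ ∑ i, q i = 1 ∧
        ∑ i, q i * Real.log (p i) + α ≤ 0 ∧
        r = ((((-∑ i, q i * Real.log (q i)) /
            (-∑ i, q i * Real.log (lam i))) : ℝ) : EReal)}
      = (⨅ t : Set.Iio (0 : ℝ), ((P t.1 : ℝ) : EReal)) ∧
    ∀ t : ℝ, t < 0 → (∀ u : ℝ, u < 0 → P t ≤ P u) →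
      (∀ i, 0 ≤ lam i ^ P t * (p i * Real.exp α) ^ t) ∧
      ∑ i, lam i ^ P t * (p i * Real.exp α) ^ t = 1 ∧
      ∑ i, lam i ^ P t * (p i * Real.exp α) ^ t * Real.log (p i) + α ≤ 0 ∧
      (-∑ i, lam i ^ P t * (p i * Real.exp α) ^ t *
          Real.log (lam i ^ P t * (p i * Real.exp α) ^ t)) /
        (-∑ i, lam i ^ P t * (p i * Real.exp α) ^ t * Real.log (lam i)) = P t := by
  set A : Fin N → ℝ := fun i => p i * Real.exp α with hAdef
  have hA : ∀ i, 0 < A i := fun i => mul_pos (hp i) (Real.exp_pos α)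
  have hw : ∀ (S t : ℝ) (i : Fin N), 0 < lam i ^ S * A i ^ t := fun S t i =>
    mul_pos (Real.rpow_pos_of_pos (hlam i).1 _) (Real.rpow_pos_of_pos (hA i) _)
  have hcon : ∀ q : Fin N → ℝ, ∑ i, q i = 1 →
      ∑ i, q i * Real.log (p i) + α = ∑ i, q i * Real.log (A i) := by
    intro q hqs
    have h1 : ∀ i, q i * Real.log (A i) = q i * Real.log (p i) + q i * α := by
      intro i
      rw [hAdef, Real.log_mul (hp i).ne' (Real.exp_pos α).ne', Real.log_exp, mul_add]
    rw [Finset.sum_congr rfl fun i _ => h1 i, Finset.sum_add_distrib, ← Finset.sum_mul, hqs,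
      one_mul]
  refine ⟨le_antisymm ?_ ?_, ?_⟩
  · refine sSup_le ?_
    rintro r ⟨q, hq, hqs, hc, rfl⟩
    refine le_iInf fun ⟨t, ht⟩ => EReal.coe_le_coe_iff.2 ?_
    have ht0 : t < 0 := ht
    rw [hcon q hqs] at hc
    rw [div_le_iff₀ (lyapunov_pos hlam hq hqs)]
    refine (gibbs (hw (P t) t) (hP t) hq hqs).trans ?_
    have h1 : ∀ i, q i * Real.log (lam i ^ P t * A i ^ t) =
        P t * (q i * Real.log (lam i)) + t * (q i * Real.log (A i)) := by
      intro i
      rw [log_weight (hlam i).1 (hA i)]; ring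
    rw [Finset.sum_congr rfl fun i _ => h1 i, Finset.sum_add_distrib, ← Finset.mul_sum,
      ← Finset.mul_sum]
    nlinarith
  · refine le_of_forall_lt fun c hc => ?_
    obtain ⟨S, hcS, hS⟩ := EReal.lt_iff_exists_real_btwn.1 hc
    have hF : ∀ t : ℝ, t < 0 → 1 < ∑ i, lam i ^ S * A i ^ t := by
      intro t ht
      have hSP : S < P t :=
        EReal.coe_lt_coe_iff.1 (hS.trans_le (iInf_le _ (⟨t, ht⟩ : Set.Iio (0 : ℝ))))
      rw [← hP t]
      refine Finset.sum_lt_sum_of_nonempty ⟨0, Finset.mem_univ _⟩ fun i _ => ?_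
      exact mul_lt_mul_of_pos_right
        (Real.rpow_lt_rpow_of_exponent_gt (hlam i).1 (hlam i).2 hSP)
        (Real.rpow_pos_of_pos (hA i) _)
    obtain ⟨q, hq, hqs, hf, hr⟩ := exists_feasible hlam hA hF
    refine hcS.trans_le ((EReal.coe_le_coe_iff.2 hr).trans (le_sSup ⟨q, hq, hqs, ?_, rfl⟩))
    rw [hcon q hqs]; exact hf
  · intro t ht hmin
    -- Minimality of `P` at `t` makes `t` a local minimum of `u ↦ ∑ λ_i^(P t) A_i^u`.
    have hloc : IsLocalMin (fun u : ℝ => ∑ i, lam i ^ P t * A i ^ u) t := by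
      filter_upwards [Iio_mem_nhds ht] with u hu
      rw [hP t, ← hP u]
      refine Finset.sum_le_sum fun i _ => ?_
      exact mul_le_mul_of_nonneg_right
        (Real.rpow_le_rpow_of_exponent_ge (hlam i).1 (hlam i).2.le (hmin u hu))
        (Real.rpow_pos_of_pos (hA i) _).le
    have hd := hloc.hasDerivAt_eq_zero (hasDerivAt_F hA (fun i => lam i ^ P t) t)
    have hnn : ∀ i, 0 ≤ lam i ^ P t * A i ^ t := fun i => (hw (P t) t i).le
    refine ⟨hnn, hP t, ?_, ?_⟩
    · rw [hcon (fun i => lam i ^ P t * A i ^ t) (hP t)]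
      exact hd.le
    · rw [div_eq_iff (lyapunov_pos hlam hnn (hP t)).ne',
        entropy_eq (lam := lam) (A := A) (S := P t) (t := t) (c := 1) (hP t)
          (fun i => Or.inr (by rw [log_weight (hlam i).1 (hA i), Real.log_one, sub_zero])),
        hd, Real.log_one]
      ring
end
end

section
/- Let Φ = {f_1,…,f_N} be an iterated function system of contracting similarities on ℝ^d with ratios λ_1,…,λ_N (no separation condition assumed), let p be a probability vector with all p_i > 0, let 0 < α ≤ −log p_min, and let ℓ : ℕ → ℕ be monotone increasing with liminf_{n→∞} ℓ(n)/log n = 1/α. Then for ℙ_p-almost every ō ∈ Σ, dim_H(Λ ∖ R(ō,ℓ)) ≤ inf_{q<0} P_α(q) (the assumption α ≤ −log p_min guarantees that this infimum is nonnegative). -/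
/-!
A point `x = π(a)` of `Λ` outside `R(o, ℓ)` has an address `a` which, for some `K`, lies in none
of the cylinders `[(σⁿ o)|_{ℓ(n)}]` with `n ≥ K`. Since `ℓ` is monotone, for each `n` the prefix
of `a` of length `m = ℓ(n)` then occurs in `o` at no position between `K` and `n`. So these points
are covered by the pieces `f_w(Λ)`, `|w| = m`, for which `o` avoids `w` at the positions
`K, K + m, K + 2 m, …` below `n` (`mem_avoidSet_of_missed`, `hausdorffMeasure_missedSet_le`).

Blocks at these positions are independent, so a given word is avoided with probability
`(1 - p_w)^M`, where `M = (n - K) / m` (`measureReal_avoidSet`). Because the liminf of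
`ℓ(n) / log n` is `1/α`, there are infinitely many `n` with `M ≥ exp(a m)`, for any prescribed
`a < α` (`exists_good_times`, `eventually_absorb`). From `(1 - x)^M ≤ C_q (x M)^q` for `q < 0`,
the expected covering sum satisfies
`Σ_w λ_w^s (1 - p_w)^M ≤ C_q (Σ_i λ_i^s (p_i e^a)^q)^m` (`sum_avoid_le`),
and when `s > P_α(q)` the base is less than `1` for `a` close to `α` (`exists_rate`). By Fatou's
lemma the covering sums almost surely have liminf `0` (`ae_liminf_cover_eq_zero`), so the missed
points have zero `s`-dimensional Hausdorff measure. Letting `s` decrease to `inf_{q<0} P_α(q)`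
along a sequence gives the bound; the infimum is over nonnegative numbers (`pressure_nonneg`).
-/


open MeasureTheory Filter Topology Set ENNReal

noncomputable section

/-! ### Block independence and avoidance of a word -/

lemma measurableSet_match {N m : ℕ} (n : ℕ) (w : Fin m → Fin N) :
    MeasurableSet {o : ℕ → Fin N | ∀ t : Fin m, o (n + t) = w t} := by
  have : {o : ℕ → Fin N | ∀ t : Fin m, o (n + t) = w t}
      = ⋂ t : Fin m, (fun o : ℕ → Fin N => o (n + t)) ⁻¹' {w t} := by
    ext o; simp
  rw [this]
  exact MeasurableSet.iInter fun t => measurable_pi_apply _ (measurableSet_singleton _)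

lemma measurableSet_cylinder_word {N m : ℕ} (w : Fin m → Fin N) :
    MeasurableSet (_root_.cylinder w) := by
  simpa [_root_.cylinder] using measurableSet_match 0 w

lemma wordProd_pos {N m : ℕ} {r : Fin N → ℝ} (hr : ∀ i, 0 < r i) (w : Fin m → Fin N) :
    0 < wordProd r w := Finset.prod_pos fun _ _ => hr _

/-- Independence of disjoint blocks: an event `B` determined by the first `n` symbols is
independent of the occurrence of the word `w` at position `n`. -/
lemma measureReal_inter_match {N : ℕ} {p : Fin N → ℝ} (hp : ∀ i, 0 < p i)
    (μ : Measure (ℕ → Fin N)) [IsProbabilityMeasure μ]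
    (hμ : ∀ (m : ℕ) (w : Fin m → Fin N),
      μ (_root_.cylinder w) = ENNReal.ofReal (wordProd p w))
    {n m : ℕ} (B : Set (ℕ → Fin N))
    (hB : ∀ o o' : ℕ → Fin N, (∀ j < n, o j = o' j) → o ∈ B → o' ∈ B) (w : Fin m → Fin N) :
    μ.real (B ∩ {o | ∀ t : Fin m, o (n + t) = w t}) = μ.real B * wordProd p w := by
  classical
  have hcyl : ∀ (k : ℕ) (v : Fin k → Fin N), μ.real (_root_.cylinder v) = wordProd p v := by
    intro k v
    rw [measureReal_def, hμ, ENNReal.toReal_ofReal (wordProd_pos hp v).le]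
  let S : Finset (Fin n → Fin N) :=
    Finset.univ.filter fun v => (_root_.cylinder v ∩ B).Nonempty
  have hBS : B = ⋃ v ∈ S, _root_.cylinder v := by
    ext o
    simp only [S, Finset.mem_filter, Finset.mem_univ, true_and, mem_iUnion, exists_prop]
    constructor
    · intro ho
      exact ⟨fun j => o j, ⟨o, fun j => rfl, ho⟩, fun j => rfl⟩
    · rintro ⟨v, ⟨o', ho'1, ho'2⟩, ho⟩
      refine hB o' o (fun j hj => ?_) ho'2
      rw [ho'1 ⟨j, hj⟩, ho ⟨j, hj⟩]
  have hBS' : B ∩ {o | ∀ t : Fin m, o (n + t) = w t}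
      = ⋃ v ∈ S, _root_.cylinder (Fin.append v w) := by
    rw [hBS]
    ext o
    simp only [mem_inter_iff, mem_iUnion, exists_prop, _root_.cylinder, mem_ofPred_eq]
    constructor
    · rintro ⟨⟨v, hv, h1⟩, h2⟩
      refine ⟨v, hv, fun j => ?_⟩
      refine Fin.addCases (fun i => ?_) (fun i => ?_) j
      · simpa using h1 i
      · simpa using h2 i
    · rintro ⟨v, hv, h⟩
      exact ⟨⟨v, hv, fun i => by simpa using h (Fin.castAdd m i)⟩,
        fun i => by simpa using h (Fin.natAdd n i)⟩
  have hdisj : (↑S : Set (Fin n → Fin N)).PairwiseDisjoint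
      (fun v => _root_.cylinder v) := by
    intro v _ v' _ hne
    refine Set.disjoint_left.2 fun o h h' => hne ?_
    ext j
    rw [← h j, ← h' j]
  have hdisj' : (↑S : Set (Fin n → Fin N)).PairwiseDisjoint
      (fun v => _root_.cylinder (Fin.append v w)) := by
    intro v _ v' _ hne
    refine Set.disjoint_left.2 fun o h h' => hne ?_
    ext j
    have h1 := h (Fin.castAdd m j)
    have h2 := h' (Fin.castAdd m j)
    simp only [Fin.append_left] at h1 h2
    rw [← h1, ← h2]
  rw [hBS', measureReal_biUnion_finset hdisj' fun v _ => measurableSet_cylinder_word _]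
  conv_rhs => rw [hBS]
  rw [measureReal_biUnion_finset hdisj fun v _ => measurableSet_cylinder_word _, Finset.sum_mul]
  refine Finset.sum_congr rfl fun v _ => ?_
  rw [hcyl, hcyl]
  simp [wordProd, Fin.prod_univ_add]

/-- The sequences in which `w` does not occur at any of the positions
`K, K + m, …, K + (M - 1) m`, where `m` is the length of `w`. -/
def avoidSet {N m : ℕ} (w : Fin m → Fin N) (K M : ℕ) : Set (ℕ → Fin N) :=
  {o | ∀ j < M, ¬ ∀ t : Fin m, o (K + j * m + t) = w t}

lemma avoidSet_succ {N m : ℕ} (w : Fin m → Fin N) (K M : ℕ) :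
    avoidSet w K (M + 1)
      = avoidSet w K M \ {o | ∀ t : Fin m, o (K + M * m + t) = w t} := by
  ext o
  simp only [avoidSet, mem_ofPred_eq, Set.mem_sdiff, Nat.lt_succ_iff_lt_or_eq]
  constructor
  · exact fun h => ⟨fun j hj => h j (Or.inl hj), h M (Or.inr rfl)⟩
  · rintro ⟨h1, h2⟩ j (hj | rfl)
    exacts [h1 j hj, h2]

lemma measurableSet_avoidSet {N m : ℕ} (w : Fin m → Fin N) (K M : ℕ) :
    MeasurableSet (avoidSet w K M) := by
  induction M with
  | zero => simp [avoidSet]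
  | succ M ih => rw [avoidSet_succ]; exact ih.diff (measurableSet_match _ _)

lemma measureReal_avoidSet {N : ℕ} {p : Fin N → ℝ} (hp : ∀ i, 0 < p i)
    (μ : Measure (ℕ → Fin N)) [IsProbabilityMeasure μ]
    (hμ : ∀ (m : ℕ) (w : Fin m → Fin N),
      μ (_root_.cylinder w) = ENNReal.ofReal (wordProd p w))
    {m : ℕ} (w : Fin m → Fin N) (K M : ℕ) :
    μ.real (avoidSet w K M) = (1 - wordProd p w) ^ M := by
  induction M with
  | zero => simp [avoidSet]
  | succ M ih =>
    have h1 := measureReal_inter_match hp μ hμ (n := K + M * m) (avoidSet w K M) (by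
      intro o o' h ho j hj hm
      refine ho j hj fun t => ?_
      rw [h _ ?_, hm t]
      -- the block at position `K + j m` ends before `K + M m`
      have : (j + 1) * m ≤ M * m := Nat.mul_le_mul_right m hj
      have := t.2
      rw [Nat.add_mul] at *
      omega) w
    have h2 := measureReal_inter_add_sdiff (μ := μ) (s := avoidSet w K M)
      (measurableSet_match (K + M * m) w)
    rw [avoidSet_succ, pow_succ, ← ih]
    linarith

/-! ### Geometry of the pieces of the attractor -/

lemma prefixMap_congr {N : ℕ} {E : Type*} (f : Fin N → E → E) (n : ℕ) :
    ∀ x y : ℕ → Fin N, (∀ k < n, x k = y k) → prefixMap f x n = prefixMap f y n := by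
  induction n with
  | zero => intro x y _; rfl
  | succ n ih =>
    intro x y h
    simp only [prefixMap]
    rw [h 0 (by omega), ih (fun k => x (k + 1)) (fun k => y (k + 1))
      (fun k hk => h _ (by omega))]

lemma dist_prefixMap {N : ℕ} {E : Type*} [PseudoMetricSpace E] {f : Fin N → E → E}
    {lam : Fin N → ℝ} (hf : ∀ i x y, dist (f i x) (f i y) = lam i * dist x y) (n : ℕ) :
    ∀ (x : ℕ → Fin N) (a b : E), dist (prefixMap f x n a) (prefixMap f x n b)
      = wordProd lam (fun j : Fin n => x j) * dist a b := by
  induction n with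
  | zero => intro x a b; simp [prefixMap, wordProd]
  | succ n ih =>
    intro x a b
    simp only [prefixMap]
    rw [hf, ih]
    simp [wordProd, Fin.prod_univ_succ, mul_assoc]

lemma ediam_prefixMap_image {N : ℕ} {E : Type*} [PseudoMetricSpace E] {f : Fin N → E → E}
    {lam : Fin N → ℝ} (hlam : ∀ i, 0 < lam i)
    (hf : ∀ i x y, dist (f i x) (f i y) = lam i * dist x y) (n : ℕ) (x : ℕ → Fin N)
    (A : Set E) : Metric.ediam (prefixMap f x n '' A)
      ≤ ENNReal.ofReal (wordProd lam (fun j : Fin n => x j)) * Metric.ediam A := by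
  refine Metric.ediam_le ?_
  rintro _ ⟨a, ha, rfl⟩ _ ⟨b, hb, rfl⟩
  rw [edist_dist, dist_prefixMap hf, ENNReal.ofReal_mul (wordProd_pos hlam _).le, ← edist_dist]
  gcongr
  exact Metric.edist_le_ediam_of_mem ha hb

/-- Every point of a self-similar set has an address. -/
lemma exists_address {N : ℕ} {E : Type*} (f : Fin N → E → E) {A : Set E}
    (hA : A = ⋃ i, f i '' A) {x : E} (hx : x ∈ A) :
    ∃ a : ℕ → Fin N, ∀ n, x ∈ prefixMap f a n '' A := by
  have h : ∀ y : A, ∃ i : Fin N, ∃ z : A, f i z = y := by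
    rintro ⟨y, hy⟩
    rw [hA] at hy
    obtain ⟨i, z, hz, rfl⟩ := mem_iUnion.1 hy
    exact ⟨i, ⟨z, hz⟩, rfl⟩
  choose g s hgs using h
  refine ⟨fun k => g (s^[k] ⟨x, hx⟩), fun n => ⟨s^[n] ⟨x, hx⟩, Subtype.prop _, ?_⟩⟩
  suffices ∀ (n : ℕ) (y : A), prefixMap f (fun k => g (s^[k] y)) n (s^[n] y) = y from
    this n ⟨x, hx⟩
  intro n
  induction n with
  | zero => intro y; rfl
  | succ n ih =>
    intro y
    simp only [prefixMap, Function.iterate_succ_apply, Function.iterate_zero, id]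
    rw [ih (s y), hgs]

lemma wordProd_le_pow {N m : ℕ} {lam : Fin N → ℝ} (hlam : ∀ i, 0 < lam i) {c : ℝ}
    (hc : ∀ i, lam i ≤ c) (w : Fin m → Fin N) : wordProd lam w ≤ c ^ m := by
  calc wordProd lam w ≤ ∏ _j : Fin m, c :=
        Finset.prod_le_prod (fun _ _ => (hlam _).le) fun _ _ => hc _
    _ = c ^ m := by simp

lemma exists_uniform_ratio {N : ℕ} [NeZero N] {lam : Fin N → ℝ}
    (hlam : ∀ i, lam i ∈ Set.Ioo (0 : ℝ) 1) : ∃ c : ℝ, 0 ≤ c ∧ c < 1 ∧ ∀ i, lam i ≤ c := by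
  obtain ⟨i, hi⟩ := Finite.exists_max lam
  exact ⟨lam i, (hlam i).1.le, (hlam i).2, hi⟩

lemma tendsto_wordProd_zero {N : ℕ} [NeZero N] {lam : Fin N → ℝ}
    (hlam : ∀ i, lam i ∈ Set.Ioo (0 : ℝ) 1) (a : ℕ → Fin N) :
    Tendsto (fun n => wordProd lam (fun j : Fin n => a j)) atTop (𝓝 0) := by
  obtain ⟨c, hc0, hc1, hc⟩ := exists_uniform_ratio hlam
  exact squeeze_zero (fun n => (wordProd_pos (fun i => (hlam i).1) _).le)
    (fun n => wordProd_le_pow (fun i => (hlam i).1) hc _)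
    (tendsto_pow_atTop_nhds_zero_of_lt_one hc0 hc1)

/-- A point lying in all the pieces of `Λ` along the address `a` is the point coded by `a`. -/
lemma coding_eq {N : ℕ} [NeZero N] {E : Type*} [NormedAddCommGroup E] {f : Fin N → E → E}
    {lam : Fin N → ℝ} (hlam : ∀ i, lam i ∈ Set.Ioo (0 : ℝ) 1)
    (hf : ∀ i x y, dist (f i x) (f i y) = lam i * dist x y) {A : Set E}
    (hA : IsCompact A) {a : ℕ → Fin N} {x z : E} (hx : ∀ n, x ∈ prefixMap f a n '' A)
    (hz : Tendsto (fun n => prefixMap f a n 0) atTop (𝓝 z)) : z = x := by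
  refine tendsto_nhds_unique hz ?_
  obtain ⟨C, hC⟩ := hA.isBounded.exists_norm_le
  rw [tendsto_iff_dist_tendsto_zero]
  refine squeeze_zero (fun _ => dist_nonneg) (fun n => ?_)
    (by simpa using (tendsto_wordProd_zero hlam a).mul_const C)
  obtain ⟨y, hy, hyx⟩ := hx n
  rw [← hyx, dist_prefixMap hf, dist_zero_left]
  exact mul_le_mul_of_nonneg_left (hC y hy) (wordProd_pos (fun i => (hlam i).1) _).le

/-! ### Real estimates and the choice of times -/

/-- Control of `(1 - x) ^ M` by a negative power of `x M`: it is at most `exp (-y)` with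
`y = x M`, and `y ^ r ≤ r ^ r * exp y` for `r = -q`. -/
lemma one_sub_pow_le {x q : ℝ} (hx : 0 < x) (hx1 : x ≤ 1) (hq : q < 0) {M : ℕ} (hM : 0 < M) :
    (1 - x) ^ M ≤ (-q) ^ (-q) * (x ^ q * (M : ℝ) ^ q) := by
  have hr : 0 < -q := by linarith
  have hM' : (0 : ℝ) < M := by exact_mod_cast hM
  have hy : 0 < x * M := by positivity
  have h1 : (1 - x) ^ M ≤ Real.exp (-(x * M)) := by
    calc (1 - x) ^ M ≤ (Real.exp (-x)) ^ M :=
          pow_le_pow_left₀ (by linarith) (Real.one_sub_le_exp_neg x) M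
      _ = Real.exp (-(x * M)) := by rw [← Real.exp_nat_mul]; ring_nf
  have h2 : (x * M) ^ (-q) ≤ (-q) ^ (-q) * Real.exp (x * M) := by
    have h3 : x * M / (-q) ≤ Real.exp (x * M / (-q)) := by
      linarith [Real.add_one_le_exp (x * M / (-q))]
    have h4 : x * M ≤ (-q) * Real.exp (x * M / (-q)) := by
      rw [div_le_iff₀ hr] at h3; linarith
    calc (x * M) ^ (-q) ≤ ((-q) * Real.exp (x * M / (-q))) ^ (-q) :=
          Real.rpow_le_rpow hy.le h4 hr.le
      _ = (-q) ^ (-q) * Real.exp (x * M) := by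
          rw [Real.mul_rpow hr.le (Real.exp_pos _).le, ← Real.exp_mul, div_mul_cancel₀ _ hr.ne']
  rw [Real.rpow_neg hy.le] at h2
  rw [← Real.mul_rpow hx.le hM'.le]
  refine h1.trans ?_
  have hz : 0 < (x * M) ^ q := Real.rpow_pos_of_pos hy q
  rw [Real.exp_neg, inv_le_iff_one_le_mul₀ (Real.exp_pos _)]
  rw [inv_le_iff_one_le_mul₀ hz] at h2
  linarith

/-- A constant plus a linear factor is absorbed by an exponential gap. -/
lemma eventually_absorb {a b : ℝ} (ha : 0 < a) (hab : a < b) (K : ℕ) :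
    ∀ᶠ m : ℕ in atTop, (K : ℝ) + m + m * Real.exp (a * m) ≤ Real.exp (b * m) := by
  set δ := b - a with hδ
  have hδ0 : 0 < δ := by linarith
  filter_upwards [eventually_ge_atTop K, eventually_ge_atTop ⌈6 / δ ^ 2⌉₊] with m hm1 hm2
  have h1 : (K : ℝ) ≤ m := by exact_mod_cast hm1
  have h2 : 6 ≤ δ ^ 2 * m := by
    have := (Nat.le_ceil _).trans (Nat.cast_le (α := ℝ).2 hm2)
    rw [div_le_iff₀ (by positivity)] at this
    linarith
  have hm0 : (0 : ℝ) ≤ m := Nat.cast_nonneg m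
  have h3 : 3 * (m : ℝ) ≤ Real.exp (δ * m) := by
    have := Real.quadratic_le_exp_of_nonneg (x := δ * m) (by positivity)
    nlinarith [mul_le_mul_of_nonneg_right h2 hm0, mul_nonneg hδ0.le hm0]
  have h4 : 1 ≤ Real.exp (a * m) := Real.one_le_exp (by positivity)
  have h5 : Real.exp (b * m) = Real.exp (δ * m) * Real.exp (a * m) := by
    rw [← Real.exp_add]; congr 1; rw [hδ]; ring
  rw [h5]
  nlinarith [mul_le_mul_of_nonneg_right h3 (Real.exp_pos (a * m)).le,
    mul_nonneg hm0 (sub_nonneg.2 h4)]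

/-- For a positive real liminf, the defining set of eventual lower bounds is nonempty and
bounded, so the liminf has its usual meaning. -/
lemma frequently_lt_of_liminf_eq {u : ℕ → ℝ} {L b : ℝ} (hL : 0 < L)
    (h : liminf u atTop = L) (hb : L < b) : ∃ᶠ n in atTop, u n < b := by
  rw [liminf_eq] at h
  by_contra hcon
  have hmem : b ∈ {a | ∀ᶠ n in atTop, a ≤ u n} := by
    simpa [Filter.not_frequently, not_lt] using hcon
  by_cases hbdd : BddAbove {a | ∀ᶠ n in atTop, a ≤ u n}
  · linarith [le_csSup hbdd hmem]
  · rw [Real.sSup_of_not_bddAbove hbdd] at h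
    linarith

lemma eventually_gt_of_liminf_eq {u : ℕ → ℝ} {L b : ℝ} (hL : 0 < L)
    (h : liminf u atTop = L) (hb : b < L) : ∀ᶠ n in atTop, b < u n := by
  rw [liminf_eq] at h
  have hne : {a | ∀ᶠ n in atTop, a ≤ u n}.Nonempty := by
    by_contra hcon
    rw [Set.not_nonempty_iff_eq_empty.1 hcon, Real.sSup_empty] at h
    linarith
  obtain ⟨a, ha, hba⟩ := exists_lt_of_lt_csSup hne (h.symm ▸ hb)
  exact Filter.Eventually.mono ha fun n hn => hba.trans_le hn

lemma tendsto_length_atTop {ℓ : ℕ → ℕ} {α : ℝ} (hα : 0 < α)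
    (hℓ : liminf (fun n : ℕ => (ℓ n : ℝ) / Real.log n) atTop = 1 / α) :
    Tendsto ℓ atTop atTop := by
  have hL : 0 < 1 / α := by positivity
  have h := eventually_gt_of_liminf_eq hL hℓ (half_lt_self hL)
  refine tendsto_natCast_atTop_iff (R := ℝ).1 ?_
  have hlog : Tendsto (fun n : ℕ => 1 / α / 2 * Real.log n) atTop atTop :=
    (Real.tendsto_log_atTop.comp tendsto_natCast_atTop_atTop).const_mul_atTop (by positivity)
  refine tendsto_atTop_mono' _ ?_ hlog
  filter_upwards [h, eventually_ge_atTop 2] with n hn h2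
  have : 0 < Real.log n := Real.log_pos (by exact_mod_cast h2)
  rw [lt_div_iff₀ this] at hn
  exact hn.le

/-- There are times `n k` at which `ℓ (n k)` is so small that `n k ≥ exp (b ℓ (n k))`. -/
lemma exists_good_times {ℓ : ℕ → ℕ} {α b : ℝ} (hα : 0 < α)
    (hℓ : liminf (fun n : ℕ => (ℓ n : ℝ) / Real.log n) atTop = 1 / α)
    (hb : 0 < b) (hbα : b < α) :
    ∃ n : ℕ → ℕ, Tendsto (fun k => ℓ (n k)) atTop atTop ∧
      ∀ k, Real.exp (b * ℓ (n k)) ≤ n k := by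
  have h := frequently_lt_of_liminf_eq (b := 1 / b) (by positivity) hℓ
    (one_div_lt_one_div_of_lt hb hbα)
  obtain ⟨n, hn, hn'⟩ := extraction_of_frequently_atTop (h.and_eventually (eventually_ge_atTop 2))
  refine ⟨n, (tendsto_length_atTop hα hℓ).comp hn.tendsto_atTop, fun k => ?_⟩
  obtain ⟨h1, h2⟩ := hn' k
  have hnpos : (0 : ℝ) < n k := by exact_mod_cast (by omega : 0 < n k)
  have hlog : 0 < Real.log (n k) := Real.log_pos (by exact_mod_cast h2)
  rw [div_lt_div_iff₀ hlog hb] at h1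
  rw [← Real.le_log_iff_exp_le hnpos]
  linarith

/-- The expected value of the covering sum is at most geometric in the word length `m`. -/
lemma sum_avoid_le {N : ℕ} {lam p : Fin N → ℝ} (hlam : ∀ i, 0 < lam i) (hp : ∀ i, 0 < p i)
    (hp1 : ∀ i, p i ≤ 1) {s q a : ℝ} (hq : q < 0) {m M : ℕ} (hM : Real.exp (a * m) ≤ M) :
    ∑ w : Fin m → Fin N, wordProd lam w ^ s * (1 - wordProd p w) ^ M
      ≤ (-q) ^ (-q) * (∑ i, lam i ^ s * (p i * Real.exp a) ^ q) ^ m := by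
  have hMpos : (0 : ℝ) < M := (Real.exp_pos _).trans_le hM
  rw [Fintype.sum_pow, Finset.mul_sum]
  refine Finset.sum_le_sum fun w _ => ?_
  have hw1 : wordProd p w ≤ 1 := by simpa using wordProd_le_pow hp hp1 w
  have h1 := one_sub_pow_le (wordProd_pos hp w) hw1 hq (M := M) (by exact_mod_cast hMpos)
  have h2 : (M : ℝ) ^ q ≤ Real.exp (a * m) ^ q :=
    Real.rpow_le_rpow_of_nonpos (Real.exp_pos _) hM hq.le
  have h3 : ∏ j, (lam (w j) ^ s * (p (w j) * Real.exp a) ^ q)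
      = wordProd lam w ^ s * (wordProd p w ^ q * Real.exp (a * m) ^ q) := by
    rw [Finset.prod_mul_distrib, wordProd, wordProd,
      Real.finsetProd_rpow _ _ (fun j _ => (hlam _).le),
      Real.finsetProd_rpow _ _ (fun j _ => (mul_pos (hp _) (Real.exp_pos a)).le),
      Finset.prod_mul_distrib, Real.mul_rpow (Finset.prod_nonneg fun j _ => (hp _).le)
        (Finset.prod_nonneg fun j _ => (Real.exp_pos a).le)]
    simp [mul_comm a, Real.exp_nat_mul]
  have hl : 0 ≤ wordProd lam w ^ s := Real.rpow_nonneg (wordProd_pos hlam w).le _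
  have hpq : 0 ≤ wordProd p w ^ q := Real.rpow_nonneg (wordProd_pos hp w).le _
  have hqq : 0 ≤ (-q) ^ (-q) := Real.rpow_nonneg (by linarith) _
  rw [h3]
  calc wordProd lam w ^ s * (1 - wordProd p w) ^ M
      ≤ wordProd lam w ^ s * ((-q) ^ (-q) * (wordProd p w ^ q * Real.exp (a * m) ^ q)) := by
        gcongr
        exact h1.trans (by gcongr)
    _ = _ := by ring

/-- The nonnegativity of `P_α(q)` for `q < 0`, which uses `α ≤ -log p_min`. -/
lemma pressure_nonneg {N : ℕ} [NeZero N] {lam p : Fin N → ℝ}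
    (hlam : ∀ i, lam i ∈ Set.Ioo (0 : ℝ) 1) (hp : ∀ i, 0 < p i) {α : ℝ}
    (hα2 : α ≤ -Real.log (⨅ i, p i)) {P q : ℝ} (hq : q < 0)
    (hP : ∑ i, lam i ^ P * (p i * Real.exp α) ^ q = 1) : 0 ≤ P := by
  obtain ⟨i, hi⟩ := exists_eq_ciInf_of_finite (f := p)
  rw [← hi] at hα2
  have h1 : p i * Real.exp α ≤ 1 := by
    calc p i * Real.exp α ≤ p i * Real.exp (-Real.log (p i)) := by
          gcongr; exact (hp i).le
      _ = 1 := by rw [Real.exp_neg, Real.exp_log (hp i), mul_inv_cancel₀ (hp i).ne']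
  have hpe : ∀ j, 0 < p j * Real.exp α := fun j => mul_pos (hp j) (Real.exp_pos _)
  have h2 : 1 ≤ (p i * Real.exp α) ^ q :=
    Real.one_le_rpow_of_pos_of_le_one_of_nonpos (hpe i) h1 hq.le
  by_contra hneg
  have h3 : 1 < lam i ^ P :=
    Real.one_lt_rpow_of_pos_of_lt_one_of_neg (hlam i).1 (hlam i).2 (not_le.1 hneg)
  have h4 : lam i ^ P * (p i * Real.exp α) ^ q ≤ 1 := by
    rw [← hP]
    exact Finset.single_le_sum (f := fun i => lam i ^ P * (p i * Real.exp α) ^ q)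
      (fun j _ => mul_nonneg (Real.rpow_nonneg (hlam j).1.le _)
        (Real.rpow_nonneg (hpe j).le _)) (Finset.mem_univ i)
  nlinarith

/-- If `s > P_α(q)`, the pressure sum at exponent `s` stays below `1` for some `a < α`. -/
lemma exists_rate {N : ℕ} [NeZero N] {lam p : Fin N → ℝ}
    (hlam : ∀ i, lam i ∈ Set.Ioo (0 : ℝ) 1) (hp : ∀ i, 0 < p i) {α : ℝ} (hα : 0 < α)
    {P q s : ℝ} (hP : ∑ i, lam i ^ P * (p i * Real.exp α) ^ q = 1) (hs : P < s) :
    ∃ a, 0 < a ∧ a < α ∧ ∑ i, lam i ^ s * (p i * Real.exp a) ^ q < 1 := by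
  have hlt : ∑ i, lam i ^ s * (p i * Real.exp α) ^ q < 1 := by
    rw [← hP]
    refine Finset.sum_lt_sum_of_nonempty Finset.univ_nonempty fun i _ => ?_
    exact mul_lt_mul_of_pos_right (Real.rpow_lt_rpow_of_exponent_gt (hlam i).1 (hlam i).2 hs)
      (Real.rpow_pos_of_pos (mul_pos (hp i) (Real.exp_pos _)) _)
  have hcont : Continuous fun a : ℝ => ∑ i, lam i ^ s * (p i * Real.exp a) ^ q := by
    refine continuous_finsetSum _ fun i _ => continuous_const.mul ?_
    exact (continuous_const.mul Real.continuous_exp).rpow_const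
      fun a => Or.inl (mul_pos (hp i) (Real.exp_pos _)).ne'
  have h1 : ∀ᶠ a in 𝓝[<] α, ∑ i, lam i ^ s * (p i * Real.exp a) ^ q < 1 :=
    nhdsWithin_le_nhds (hcont.continuousAt.eventually_lt_const hlt)
  have h2 : ∀ᶠ a in 𝓝[<] α, 0 < a := nhdsWithin_le_nhds (lt_mem_nhds hα)
  obtain ⟨a, ha1, ha2, ha3⟩ := (h1.and (h2.and self_mem_nhdsWithin)).exists
  exact ⟨a, ha2, ha3, ha1⟩

/-! ### Almost sure covers and Hausdorff dimension -/

/-- Fatou's lemma turns the decay of the expected covering sums into the almost sure vanishing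
of their liminf. -/
lemma ae_liminf_cover_eq_zero {N : ℕ} {lam p : Fin N → ℝ} (hlam : ∀ i, 0 < lam i)
    (hp : ∀ i, 0 < p i) (hp1 : ∀ i, p i ≤ 1)
    (μ : Measure (ℕ → Fin N)) [IsProbabilityMeasure μ]
    (hμ : ∀ (m : ℕ) (w : Fin m → Fin N),
      μ (_root_.cylinder w) = ENNReal.ofReal (wordProd p w))
    {s q a : ℝ} (hq : q < 0) (hθ : ∑ i, lam i ^ s * (p i * Real.exp a) ^ q < 1)
    {m M : ℕ → ℕ} (hm : Tendsto m atTop atTop)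
    (hM : ∀ᶠ k in atTop, Real.exp (a * m k) ≤ M k) (K : ℕ) {c : ℝ≥0∞} (hc : c ≠ ∞) :
    ∀ᵐ o ∂μ, liminf (fun k => c * ∑ w : Fin (m k) → Fin N,
      (avoidSet w K (M k)).indicator (fun _ => ENNReal.ofReal (wordProd lam w ^ s)) o) atTop
        = 0 := by
  set Z : ℕ → (ℕ → Fin N) → ℝ≥0∞ := fun k o => c * ∑ w : Fin (m k) → Fin N,
    (avoidSet w K (M k)).indicator (fun _ => ENNReal.ofReal (wordProd lam w ^ s)) o with hZ
  have hmeas0 : ∀ k (w : Fin (m k) → Fin N), Measurable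
      ((avoidSet w K (M k)).indicator fun _ => ENNReal.ofReal (wordProd lam w ^ s)) :=
    fun k w => measurable_const.indicator (measurableSet_avoidSet w K (M k))
  have hmeas : ∀ k, Measurable (Z k) := fun k =>
    (Finset.measurable_fun_sum _ fun w _ => hmeas0 k w).const_mul c
  set θ := ∑ i, lam i ^ s * (p i * Real.exp a) ^ q with hθdef
  have hθ0 : 0 ≤ θ := Finset.sum_nonneg fun i _ =>
    mul_nonneg (Real.rpow_nonneg (hlam i).le _)
      (Real.rpow_nonneg (mul_pos (hp i) (Real.exp_pos _)).le _)
  have hint : ∀ k, ∫⁻ o, Z k o ∂μ = c * ENNReal.ofReal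
      (∑ w : Fin (m k) → Fin N, wordProd lam w ^ s * (1 - wordProd p w) ^ M k) := by
    intro k
    have hle : ∀ w : Fin (m k) → Fin N, 0 ≤ wordProd lam w ^ s := fun w =>
      Real.rpow_nonneg (wordProd_pos hlam w).le _
    simp only [hZ]
    rw [lintegral_const_mul _ (Finset.measurable_fun_sum _ fun w _ => hmeas0 k w),
      lintegral_finsetSum _ fun w _ => hmeas0 k w, ENNReal.ofReal_sum_of_nonneg]
    · congr 1
      refine Finset.sum_congr rfl fun w _ => ?_
      rw [lintegral_indicator_const (measurableSet_avoidSet w K (M k)),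
        ENNReal.ofReal_mul (hle w), ← measureReal_avoidSet hp μ hμ w K, ofReal_measureReal]
    · intro w _
      rw [← measureReal_avoidSet hp μ hμ w K]
      exact mul_nonneg (hle w) measureReal_nonneg
  have hlim : Tendsto (fun k => ∫⁻ o, Z k o ∂μ) atTop (𝓝 0) := by
    have h1 : Tendsto (fun k => c * ENNReal.ofReal ((-q) ^ (-q) * θ ^ m k)) atTop (𝓝 0) := by
      have h2 : Tendsto (fun k => (-q) ^ (-q) * θ ^ m k) atTop (𝓝 0) := by
        simpa using ((tendsto_pow_atTop_nhds_zero_of_lt_one hθ0 hθ).comp hm).const_mul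
          ((-q) ^ (-q))
      have h3 := ENNReal.Tendsto.const_mul (ENNReal.tendsto_ofReal h2) (Or.inr hc)
      simpa using h3
    refine tendsto_of_tendsto_of_tendsto_of_le_of_le' tendsto_const_nhds h1
      (Eventually.of_forall fun _ => zero_le) ?_
    filter_upwards [hM] with k hk
    rw [hint k]
    gcongr
    exact sum_avoid_le hlam hp hp1 hq hk
  have hfatou : ∫⁻ o, liminf (fun k => Z k o) atTop ∂μ = 0 := by
    refine le_antisymm ?_ zero_le
    exact (lintegral_liminf_le hmeas).trans hlim.liminf_eq.le
  rw [lintegral_eq_zero_iff (Measurable.liminf hmeas)] at hfatou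
  exact hfatou

/-- An infinite sequence beginning with the finite word `w`. -/
def extendWord {N m : ℕ} [NeZero N] (w : Fin m → Fin N) : ℕ → Fin N :=
  fun k => if h : k < m then w ⟨k, h⟩ else 0

/-- The points of `Λ` having an address that avoids all the cylinders `[(σⁿ o)|_{ℓ(n)}]`
with `n ≥ K`. -/
def missedSet {N : ℕ} {E : Type*} (f : Fin N → E → E) (Λ : Set E) (ℓ : ℕ → ℕ)
    (o : ℕ → Fin N) (K : ℕ) : Set E :=
  {x | ∃ a : ℕ → Fin N, (∀ n, x ∈ prefixMap f a n '' Λ) ∧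
    ∀ n, K ≤ n → a ∉ _root_.cylinder (fun j : Fin (ℓ n) => o (n + (j : ℕ)))}

/-- If `a` avoids the cylinders at all times `n ≥ K`, then its prefix of length `ℓ(n)` does not
occur in `o` at the positions `K, K + ℓ(n), …` up to `n`, because `ℓ` is monotone. -/
lemma mem_avoidSet_of_missed {N : ℕ} {ℓ : ℕ → ℕ} (hℓ : Monotone ℓ) {o a : ℕ → Fin N} {K : ℕ}
    (h : ∀ n, K ≤ n → a ∉ _root_.cylinder (fun j : Fin (ℓ n) => o (n + (j : ℕ)))) (n : ℕ) :
    o ∈ avoidSet (fun j : Fin (ℓ n) => a j) K ((n - K) / ℓ n) := by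
  intro j hj hmatch
  have h1 : j * ℓ n ≤ n - K :=
    (Nat.mul_le_mul_right _ hj.le).trans (Nat.div_mul_le_self _ _)
  have h2 : 0 < n - K := by
    by_contra h0
    have : n - K = 0 := by omega
    simp [this] at hj
  refine h (K + j * ℓ n) (by omega) fun t => ?_
  have hle : ℓ (K + j * ℓ n) ≤ ℓ n := hℓ (by omega)
  exact (hmatch ⟨t, t.2.trans_le hle⟩).symm

/-- The missed set is covered by the pieces of `Λ` of level `ℓ(n k)` whose words are avoided by
`o`, which bounds its Hausdorff measure by the corresponding covering sums. -/
lemma hausdorffMeasure_missedSet_le {N : ℕ} [NeZero N] {E : Type*} [MetricSpace E]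
    [MeasurableSpace E] [BorelSpace E] {f : Fin N → E → E} {lam : Fin N → ℝ}
    (hlam : ∀ i, lam i ∈ Set.Ioo (0 : ℝ) 1)
    (hf : ∀ i x y, dist (f i x) (f i y) = lam i * dist x y) {Λ : Set E} (hΛ : IsCompact Λ)
    {ℓ : ℕ → ℕ} (hℓ : Monotone ℓ) {n : ℕ → ℕ} (hn : Tendsto (fun k => ℓ (n k)) atTop atTop)
    {s : ℝ} (hs : 0 < s) (K : ℕ) (o : ℕ → Fin N) :
    μH[s] (missedSet f Λ ℓ o K) ≤ liminf (fun k => Metric.ediam Λ ^ s *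
      ∑ w : Fin (ℓ (n k)) → Fin N, (avoidSet w K ((n k - K) / ℓ (n k))).indicator
        (fun _ => ENNReal.ofReal (wordProd lam w ^ s)) o) atTop := by
  classical
  obtain ⟨c, hc0, hc1, hc⟩ := exists_uniform_ratio hlam
  have hlam0 : ∀ i, 0 < lam i := fun i => (hlam i).1
  have hdiam : Metric.ediam Λ ≠ ∞ := hΛ.isBounded.ediam_ne_top
  have hext : ∀ {m : ℕ} (w : Fin m → Fin N), (fun j : Fin m => extendWord w j) = w := by
    intro m w; ext j; simp [extendWord]
  let t : ∀ k, (Fin (ℓ (n k)) → Fin N) → Set E := fun k w =>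
    if o ∈ avoidSet w K ((n k - K) / ℓ (n k))
      then prefixMap f (extendWord w) (ℓ (n k)) '' Λ else ∅
  have hpiece : ∀ {m : ℕ} (w : Fin m → Fin N),
      Metric.ediam (prefixMap f (extendWord w) m '' Λ)
        ≤ ENNReal.ofReal (wordProd lam w) * Metric.ediam Λ := by
    intro m w
    simpa only [hext w] using ediam_prefixMap_image hlam0 hf m (extendWord w) Λ
  have hr : Tendsto (fun k => ENNReal.ofReal (c ^ ℓ (n k)) * Metric.ediam Λ) atTop (𝓝 0) := by
    have h1 : Tendsto (fun k => c ^ ℓ (n k)) atTop (𝓝 0) :=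
      (tendsto_pow_atTop_nhds_zero_of_lt_one hc0 hc1).comp hn
    simpa using ENNReal.Tendsto.mul_const (ENNReal.tendsto_ofReal h1) (Or.inr hdiam)
  refine (Measure.hausdorffMeasure_le_liminf_sum s (missedSet f Λ ℓ o K) _ hr t
    (Eventually.of_forall fun k w => ?_) (Eventually.of_forall fun k x hx => ?_)).trans ?_
  · by_cases h : o ∈ avoidSet w K ((n k - K) / ℓ (n k))
    · simp only [t, if_pos h]
      refine (hpiece w).trans ?_
      gcongr
      exact wordProd_le_pow hlam0 hc w
    · simp [t, if_neg h]
  · obtain ⟨a, ha, hmiss⟩ := hx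
    refine mem_iUnion.2 ⟨fun j => a j, ?_⟩
    simp only [t, if_pos (mem_avoidSet_of_missed hℓ hmiss (n k))]
    rw [prefixMap_congr f _ (extendWord fun j : Fin (ℓ (n k)) => a j) a
      (fun i hi => by simp [extendWord, hi])]
    exact ha _
  · refine liminf_le_liminf (Eventually.of_forall fun k => ?_)
    rw [Finset.mul_sum]
    refine Finset.sum_le_sum fun w _ => ?_
    by_cases h : o ∈ avoidSet w K ((n k - K) / ℓ (n k))
    · simp only [t, if_pos h, indicator_of_mem h]
      refine (ENNReal.rpow_le_rpow (hpiece w) hs.le).trans ?_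
      rw [ENNReal.mul_rpow_of_nonneg _ _ hs.le,
        ENNReal.ofReal_rpow_of_nonneg (wordProd_pos hlam0 w).le hs.le, mul_comm]
    · simp [t, if_neg h, hs]

lemma diff_subset_iUnion_missedSet {N : ℕ} [NeZero N] {E : Type*} [NormedAddCommGroup E]
    {f : Fin N → E → E} {lam : Fin N → ℝ} (hlam : ∀ i, lam i ∈ Set.Ioo (0 : ℝ) 1)
    (hf : ∀ i x y, dist (f i x) (f i y) = lam i * dist x y) {Λ : Set E} (hΛc : IsCompact Λ)
    (hΛ : Λ = ⋃ i, f i '' Λ) {π : (ℕ → Fin N) → E}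
    (hπ : ∀ x, Tendsto (fun n => prefixMap f x n 0) atTop (𝓝 (π x)))
    (ℓ : ℕ → ℕ) (o : ℕ → Fin N) :
    Λ \ π '' limsupCylinders ℓ o ⊆ ⋃ K, missedSet f Λ ℓ o K := by
  rintro x ⟨hx, hxR⟩
  obtain ⟨a, ha⟩ := exists_address f hΛ hx
  have hax : a ∉ limsupCylinders ℓ o := fun h =>
    hxR ⟨a, h, coding_eq hlam hf hΛc ha (hπ a)⟩
  simp only [limsupCylinders, mem_iInter, mem_iUnion, not_forall, not_exists] at hax
  obtain ⟨K, hK⟩ := hax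
  exact mem_iUnion.2 ⟨K, a, ha, fun n hn => hK n hn⟩

/-- The dimension bound for a single exponent `s > P_α(q)`. -/
lemma ae_dimH_le {N : ℕ} [NeZero N] {E : Type*} [NormedAddCommGroup E]
    {lam p : Fin N → ℝ} (hlam : ∀ i, lam i ∈ Set.Ioo (0 : ℝ) 1)
    (hp : ∀ i, 0 < p i) (hpsum : ∑ i, p i = 1) {f : Fin N → E → E}
    (hf : ∀ i x y, dist (f i x) (f i y) = lam i * dist x y) {Λ : Set E} (hΛc : IsCompact Λ)
    (hΛ : Λ = ⋃ i, f i '' Λ) {π : (ℕ → Fin N) → E}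
    (hπ : ∀ x, Tendsto (fun n => prefixMap f x n 0) atTop (𝓝 (π x)))
    (μ : Measure (ℕ → Fin N)) [IsProbabilityMeasure μ]
    (hμ : ∀ (m : ℕ) (w : Fin m → Fin N),
      μ (_root_.cylinder w) = ENNReal.ofReal (wordProd p w))
    {α : ℝ} (hα : 0 < α) {ℓ : ℕ → ℕ} (hℓmono : Monotone ℓ)
    (hℓ : liminf (fun n : ℕ => (ℓ n : ℝ) / Real.log n) atTop = 1 / α)
    {P q s : ℝ} (hq : q < 0) (hP : ∑ i, lam i ^ P * (p i * Real.exp α) ^ q = 1)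
    (hP0 : 0 ≤ P) (hs : P < s) :
    ∀ᵐ o ∂μ, dimH (Λ \ π '' limsupCylinders ℓ o) ≤ ENNReal.ofReal s := by
  let _ : MeasurableSpace E := borel E
  have : BorelSpace E := ⟨rfl⟩
  have hs0 : 0 < s := hP0.trans_lt hs
  have hp1 : ∀ i, p i ≤ 1 := fun i =>
    hpsum ▸ Finset.single_le_sum (fun j _ => (hp j).le) (Finset.mem_univ i)
  obtain ⟨a, ha0, haα, hθ⟩ := exists_rate hlam hp hα hP hs
  obtain ⟨b, hab, hbα⟩ := exists_between haα
  obtain ⟨n, hn, hexp⟩ := exists_good_times hα hℓ (ha0.trans hab) hbα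
  -- there are at least `exp (a ℓ(n))` disjoint blocks of length `ℓ(n)` between `K` and `n`
  have hM : ∀ K : ℕ, ∀ᶠ k in atTop,
      Real.exp (a * ℓ (n k)) ≤ ((n k - K) / ℓ (n k) : ℕ) := by
    intro K
    filter_upwards [hn.eventually (eventually_absorb ha0 hab K),
      hn.eventually (eventually_gt_atTop 0)] with k hk hpos
    have h1 := hk.trans (hexp k)
    have hpos' : (0 : ℝ) < ℓ (n k) := by exact_mod_cast hpos
    have h2 : (n k : ℝ) ≤ K + ((n k - K) / ℓ (n k) : ℕ) * ℓ (n k) + ℓ (n k) := by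
      have := Nat.lt_div_mul_add (a := n k - K) hpos
      exact_mod_cast (by omega : n k ≤ K + (n k - K) / ℓ (n k) * ℓ (n k) + ℓ (n k))
    have h3 : Real.exp (a * ℓ (n k)) * ℓ (n k)
        ≤ ((n k - K) / ℓ (n k) : ℕ) * (ℓ (n k) : ℝ) := by linarith
    exact le_of_mul_le_mul_right h3 hpos'
  have hc : Metric.ediam Λ ^ s ≠ ∞ :=
    ENNReal.rpow_ne_top_of_nonneg hs0.le hΛc.isBounded.ediam_ne_top
  have hae : ∀ᵐ o ∂μ, ∀ K : ℕ, liminf (fun k => Metric.ediam Λ ^ s *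
      ∑ w : Fin (ℓ (n k)) → Fin N, (avoidSet w K ((n k - K) / ℓ (n k))).indicator
        (fun _ => ENNReal.ofReal (wordProd lam w ^ s)) o) atTop = 0 :=
    ae_all_iff.2 fun K => ae_liminf_cover_eq_zero (fun i => (hlam i).1) hp hp1 μ hμ hq hθ hn
      (hM K) K hc
  filter_upwards [hae] with o ho
  have hnull : μH[s] (⋃ K, missedSet f Λ ℓ o K) = 0 := by
    refine measure_iUnion_null fun K => le_antisymm ?_ zero_le
    exact (hausdorffMeasure_missedSet_le hlam hf hΛc hℓmono hn hs0 K o).trans (ho K).le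
  refine (dimH_mono (diff_subset_iUnion_missedSet hlam hf hΛc hΛ hπ ℓ o)).trans ?_
  refine dimH_le_of_hausdorffMeasure_ne_top (d := s.toNNReal) ?_
  rw [Real.coe_toNNReal s hs0.le, hnull]
  exact ENNReal.zero_ne_top

/-- Upper bound for the complement: `dim_H (Λ ∖ R(ō,ℓ)) ≤ inf_(q<0) P_α(q)` for
`ℙ_p`-a.e. `ō`, when `0 < α ≤ −log p_min`. No separation condition is assumed. -/
theorem dimH_coverSet_compl_le {N d : ℕ} [NeZero N] (hN : 2 ≤ N)
    (lam p : Fin N → ℝ)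
    (hlam : ∀ i, lam i ∈ Set.Ioo (0 : ℝ) 1)
    (hp : ∀ i, 0 < p i) (hpsum : ∑ i, p i = 1)
    (f : Fin N → EuclideanSpace ℝ (Fin d) → EuclideanSpace ℝ (Fin d))
    (hf : ∀ i x y, dist (f i x) (f i y) = lam i * dist x y)
    (Λ : Set (EuclideanSpace ℝ (Fin d)))
    (hΛne : Λ.Nonempty) (hΛc : IsCompact Λ) (hΛ : Λ = ⋃ i, f i '' Λ)
    (π : (ℕ → Fin N) → EuclideanSpace ℝ (Fin d))
    (hπ : ∀ x, Filter.Tendsto (fun n => prefixMap f x n 0) Filter.atTop (nhds (π x)))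
    (μ : Measure (ℕ → Fin N)) [IsProbabilityMeasure μ]
    (hμ : ∀ (m : ℕ) (w : Fin m → Fin N), μ (cylinder w) = ENNReal.ofReal (wordProd p w))
    (α : ℝ) (hα : 0 < α)
    (ℓ : ℕ → ℕ) (hℓmono : Monotone ℓ)
    (hℓ : Filter.liminf (fun n : ℕ => (ℓ n : ℝ) / Real.log n) Filter.atTop = 1 / α)
    (P : ℝ → ℝ)
    (hP : ∀ q : ℝ, ∑ i, lam i ^ P q * (p i * Real.exp α) ^ q = 1)
    (hα2 : α ≤ -Real.log (⨅ i, p i)) :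
    ∀ᵐ o ∂μ, dimH (Λ \ π '' limsupCylinders ℓ o)
      ≤ ENNReal.ofReal (sInf (P '' Set.Iio 0)) := by
  have hlb : ∀ q ∈ Set.Iio (0 : ℝ), 0 ≤ P q := fun q hq =>
    pressure_nonneg hlam hp hα2 hq (hP q)
  have hne : (P '' Set.Iio 0).Nonempty := ⟨P (-1), -1, by simp, rfl⟩
  have hI0 : 0 ≤ sInf (P '' Set.Iio 0) := le_csInf hne (by rintro _ ⟨q, hq, rfl⟩; exact hlb q hq)
  have hae : ∀ᵐ o ∂μ, ∀ n : ℕ, dimH (Λ \ π '' limsupCylinders ℓ o)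
      ≤ ENNReal.ofReal (sInf (P '' Set.Iio 0) + 1 / ((n : ℝ) + 1)) := by
    refine ae_all_iff.2 fun n => ?_
    obtain ⟨_, ⟨q, hq, rfl⟩, hlt⟩ := exists_lt_of_csInf_lt hne
      (lt_add_of_pos_right (sInf (P '' Set.Iio 0)) (Nat.one_div_pos_of_nat (α := ℝ) (n := n)))
    exact ae_dimH_le hlam hp hpsum hf hΛc hΛ hπ μ hμ hα hℓmono hℓ hq (hP q) (hlb q hq) hlt
  filter_upwards [hae] with o ho
  have hlim : Tendsto (fun n : ℕ => sInf (P '' Set.Iio 0) + 1 / ((n : ℝ) + 1)) atTop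
      (𝓝 (sInf (P '' Set.Iio 0))) := by
    simpa using tendsto_one_div_add_atTop_nhds_zero_nat.const_add (sInf (P '' Set.Iio 0))
  exact ge_of_tendsto' (ENNReal.tendsto_ofReal hlim) ho
end
end
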